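/- Assume α = β and 0 < δ < α. Let x ∈ K with ‖x − x₀‖ = r. If α < r < α²/δ, then ‖f^[n](x) − x₀‖ = α²/r for every n ≥ 1. If r > α²/δ, then ‖f^[n](x) − x₀‖ = δ for every n ≥ 1. -/

import Mathlib

/-!
In the coordinate `y = x - x₀`, with `u = x₀ - x₁` and `v = x₀ - x₂`, the map becomes
`y ↦ y * ((u + v) * y + u * v) / ((y + u) * (y + v))`, and `‖u + v‖ = δ`, `‖u * v‖ = α²`
(`map_sub_fixed`). The strict ultrametric inequality then evaluates the norm of each factor, unless
two summands have equal norm. This gives `‖y‖ ↦ ‖y‖` for `‖y‖ < α`, `‖y‖ ↦ α² / ‖y‖` for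
`α < ‖y‖ < α² / δ`, and `‖y‖ ↦ δ` for `‖y‖ > α² / δ`. In the last two cases the new norm is smaller
than `α`, so it never changes again.
-/

lemma norm_add_eq_left_of_lt {K : Type*} [NormedField K] [IsUltrametricDist K] {x y : K}
    (h : ‖y‖ < ‖x‖) : ‖x + y‖ = ‖x‖ := by
  rw [IsUltrametricDist.norm_add_eq_max_of_norm_ne_norm h.ne', max_eq_left h.le]

lemma norm_add_eq_right_of_lt {K : Type*} [NormedField K] [IsUltrametricDist K] {x y : K}
    (h : ‖x‖ < ‖y‖) : ‖x + y‖ = ‖y‖ := by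
  rw [add_comm, norm_add_eq_left_of_lt h]

/-- The map in the coordinate centred at its fixed point `x₀ = (a - d) / 3`. The denominator must
not vanish, since there the left-hand side takes the junk value `-x₀`. -/
lemma map_sub_fixed {K : Type*} [Field K] [CharZero K] {a b d x₀ x₁ x₂ : K}
    (hx₀ : x₀ = (a - d) / 3) (hsum : x₁ + x₂ = -d) (hprod : x₁ * x₂ = (a - d) ^ 2 / 3 + b)
    (x : K) (hQ : (x - x₀ + (x₀ - x₁)) * (x - x₀ + (x₀ - x₂)) ≠ 0) :
    (a * x ^ 2 + b * x + ((a - d) / 3) ^ 3) / (x ^ 2 + d * x + (a - d) ^ 2 / 3 + b) - x₀ =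
      (x - x₀) * ((2 * a + d) / 3 * (x - x₀) + (x₀ - x₁) * (x₀ - x₂)) /
        ((x - x₀ + (x₀ - x₁)) * (x - x₀ + (x₀ - x₂))) := by
  have hb : b = x₁ * x₂ - 3 * x₀ ^ 2 := by rw [hprod, hx₀]; ring
  have hd : d = -(x₁ + x₂) := by rw [hsum, neg_neg]
  have ha : a = 3 * x₀ + d := by rw [hx₀]; ring
  have e : x ^ 2 + d * x + (a - d) ^ 2 / 3 + b =
      (x - x₀ + (x₀ - x₁)) * (x - x₀ + (x₀ - x₂)) := by
    rw [ha, hb, hd]; ring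
  rw [e, eq_div_iff hQ, sub_mul, div_mul_cancel₀ _ hQ, ha, hb, hd]
  ring

/-- assume `α = β` and `0 < δ < α`; if `α < ‖x − x₀‖ = r < α²/δ`, then
`‖f^[n](x) − x₀‖ = α²/r` for all `n ≥ 1`; if `r > α²/δ`, then `‖f^[n](x) − x₀‖ = δ`
for all `n ≥ 1`. -/
theorem stmt_6 {K : Type*} [NormedField K] [IsUltrametricDist K] [CharZero K]
    (a b d : K) (f : K → K)
    (hf : ∀ x : K, f x =
      (a * x ^ 2 + b * x + ((a - d) / 3) ^ 3) / (x ^ 2 + d * x + (a - d) ^ 2 / 3 + b))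
    (x₀ x₁ x₂ : K) (hx₀ : x₀ = (a - d) / 3)
    (hsum : x₁ + x₂ = -d) (hprod : x₁ * x₂ = (a - d) ^ 2 / 3 + b)
    (δ α β : ℝ) (hδ : δ = ‖(2 * a + d) / 3‖) (hα : α = ‖x₀ - x₁‖) (hβ : β = ‖x₀ - x₂‖)
    (hαβ : α = β) (hδ0 : 0 < δ) (hδα : δ < α)
    (x : K) (r : ℝ) (hr : ‖x - x₀‖ = r) :
    (α < r → r < α ^ 2 / δ → ∀ n : ℕ, 1 ≤ n → ‖f^[n] x - x₀‖ = α ^ 2 / r) ∧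
    (α ^ 2 / δ < r → ∀ n : ℕ, 1 ≤ n → ‖f^[n] x - x₀‖ = δ) := by
  have hα0 : 0 < α := hδ0.trans hδα
  have hu : ‖x₀ - x₁‖ = α := hα.symm
  have hv : ‖x₀ - x₂‖ = α := by rw [← hβ, hαβ]
  have hfix : ∀ x : K, (x - x₀ + (x₀ - x₁)) * (x - x₀ + (x₀ - x₂)) ≠ 0 → ‖f x - x₀‖ =
      ‖x - x₀‖ * ‖(2 * a + d) / 3 * (x - x₀) + (x₀ - x₁) * (x₀ - x₂)‖ /
        ‖(x - x₀ + (x₀ - x₁)) * (x - x₀ + (x₀ - x₂))‖ := fun x hQ => by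
    rw [hf, map_sub_fixed hx₀ hsum hprod x hQ, norm_div, norm_mul]
  have hw : ∀ x : K, ‖(2 * a + d) / 3 * (x - x₀)‖ = δ * ‖x - x₀‖ := fun x => by
    rw [norm_mul, hδ]
  have huv : ‖(x₀ - x₁) * (x₀ - x₂)‖ = α ^ 2 := by rw [norm_mul, hu, hv, sq]
  have hsmall : ∀ x : K, ‖x - x₀‖ < α → ‖f x - x₀‖ = ‖x - x₀‖ := by
    intro x hx
    have hQ : ‖(x - x₀ + (x₀ - x₁)) * (x - x₀ + (x₀ - x₂))‖ = α ^ 2 := by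
      rw [norm_mul, norm_add_eq_right_of_lt (hx.trans_eq hu.symm),
        norm_add_eq_right_of_lt (hx.trans_eq hv.symm), hu, hv, sq]
    have hN : ‖(2 * a + d) / 3 * (x - x₀) + (x₀ - x₁) * (x₀ - x₂)‖ = α ^ 2 := by
      rw [norm_add_eq_right_of_lt, huv]
      rw [hw, huv]
      nlinarith [norm_nonneg (x - x₀)]
    rw [hfix x (norm_pos_iff.mp (by rw [hQ]; positivity)), hN, hQ]
    field_simp
  have hQlarge : α < r → ‖(x - x₀ + (x₀ - x₁)) * (x - x₀ + (x₀ - x₂))‖ = r ^ 2 := by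
    intro h
    rw [norm_mul, norm_add_eq_left_of_lt (by rw [hu, hr]; exact h),
      norm_add_eq_left_of_lt (by rw [hv, hr]; exact h), hr, sq]
  -- The iterates stay on one sphere as soon as the first one lies inside the ball of radius `α`.
  have hiter : ∀ s : ℝ, s < α → ‖f x - x₀‖ = s → ∀ n : ℕ, 1 ≤ n → ‖f^[n] x - x₀‖ = s := by
    intro s hs h1 n hn
    induction n, hn using Nat.le_induction with
    | base => exact h1
    | succ n _ ih =>
      rw [Function.iterate_succ_apply', hsmall _ (ih.trans_lt hs), ih]
  refine ⟨fun h1 h2 => ?_, fun h => ?_⟩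
  · have hr0 : 0 < r := hα0.trans h1
    rw [lt_div_iff₀ hδ0] at h2
    apply hiter
    · rw [div_lt_iff₀ hr0]
      nlinarith
    · have hQ := hQlarge h1
      rw [hfix x (norm_pos_iff.mp (by rw [hQ]; positivity)), hQ,
        norm_add_eq_right_of_lt (by rw [hw, huv, hr]; linarith), huv, hr]
      field_simp
  · have h1 : α < r := by
      refine lt_trans ?_ h
      rw [lt_div_iff₀ hδ0]
      nlinarith
    have hr0 : 0 < r := hα0.trans h1
    rw [div_lt_iff₀ hδ0] at h
    apply hiter _ hδα
    have hQ := hQlarge h1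
    rw [hfix x (norm_pos_iff.mp (by rw [hQ]; positivity)), hQ,
      norm_add_eq_left_of_lt (by rw [hw, huv, hr]; linarith), hw, hr]
    field_simp
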